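/- Let u : ℝⁿ → ℝ be continuous and bounded, let L : ℝⁿ → [0,∞) be a nonnegative C¹ function with L(0) = DL(0) = 0 and L superlinear, let t > 0, and let x ∈ ℝⁿ. Then the infimal convolution u_t is differentiable at x with Du_t(x) = −DL(a) for every a ∈ R u_t(x) if and only if DL(a) = DL(a') for every a, a' ∈ R u_t(x). -/

import Mathlib

open MeasureTheory Filter Metric Set
open scoped RealInnerProductSpace ENNReal Topology NNReal

noncomputable section

/-- Euclidean space `ℝⁿ`. -/
abbrev Eucl (n : ℕ) := EuclideanSpace ℝ (Fin n)

/-- Infimal convolution (Hopf–Lax formula): `u_t(x) = inf_a ( u(x + t a) + t L(a) )`. -/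
def infConv {n : ℕ} (u L : Eucl n → ℝ) (t : ℝ) (x : Eucl n) : ℝ :=
  ⨅ a : Eucl n, (u (x + t • a) + t * L a)

/-- `L` is superlinear: `L x / ‖x‖ → ∞` as `‖x‖ → ∞`. -/
def Superlinear {n : ℕ} (L : Eucl n → ℝ) : Prop :=
  Tendsto (fun x => L x / ‖x‖) (Bornology.cobounded (Eucl n)) atTop

/-- `g` is the weak (distributional) gradient of `u` on `ℝⁿ`. -/
def HasWeakGradient {n : ℕ} (u : Eucl n → ℝ) (g : Eucl n → Eucl n) : Prop :=
  ∀ φ : Eucl n → ℝ, ContDiff ℝ (⊤ : ℕ∞) φ → HasCompactSupport φ →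
    ∀ v : Eucl n, ∫ x, u x * fderiv ℝ φ x v = - ∫ x, φ x * ⟪g x, v⟫

/-- The set `R u_t(x)` of minimizers in the infimal convolution. -/
def minSet {n : ℕ} (u L : Eucl n → ℝ) (t : ℝ) (x : Eucl n) : Set (Eucl n) :=
  {a | infConv u L t x = u (x + t • a) + t * L a}

/-!
Substituting `y = x + t a` turns the Hopf–Lax formula into the infimum over `y` of
`u y + t L ((y - x) / t)`. Now `u` no longer sees `x`, so this expression is `C¹` in `x` however
rough `u` is, with `x`-derivative `-DL ((y - x) / t)`. Danskin's theorem then applies: an infimum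
over `y` is differentiable at `x₀` once all minimizers at `x₀` have the same partial derivative.
Indeed a fixed minimizer at `x₀` bounds the infimum from above near `x₀`, while the minimizers at
nearby points, which cluster at minimizers at `x₀`, bound it from below to first order.
-/

section Minimum

variable {X Y β : Type*} [TopologicalSpace Y]

theorem iInf_eq_of_isMinOn_univ [ConditionallyCompleteLattice β] {g : X → β} {a : X}
    (h : IsMinOn g univ a) : ⨅ b, g b = g a :=
  IsLeast.csInf_eq ⟨mem_range_self a, forall_mem_range.2 (isMinOn_univ_iff.1 h)⟩

theorem exists_isMinOn_univ_of_isCompact [LinearOrder β] {g : Y → β} {K : Set Y} {y₀ : Y}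
    (hg : LowerSemicontinuous g) (hK : IsCompact K) (hy₀ : y₀ ∈ K) (h : ∀ y ∉ K, g y₀ ≤ g y) :
    ∃ y ∈ K, IsMinOn g univ y := by
  obtain ⟨y, hyK, hy⟩ := (hg.lowerSemicontinuousOn K).exists_isMinOn ⟨y₀, hy₀⟩ hK
  refine ⟨y, hyK, isMinOn_univ_iff.2 fun z => ?_⟩
  by_cases hz : z ∈ K
  · exact hy hz
  · exact (hy hy₀).trans (h z hz)

variable [TopologicalSpace X] [LinearOrder β] {f : X → Y → β} {x₀ : X}

theorem exists_isCompact_eventually_exists_isMinOn [Nonempty Y] [NoMaxOrder β]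
    (hf_lsc : ∀ x, LowerSemicontinuous (f x)) (hf_usc : ∀ y, UpperSemicontinuousAt (f · y) x₀)
    (hf_lim : Tendsto (Function.uncurry f) (𝓝 x₀ ×ˢ cocompact Y) atTop) :
    ∃ K, IsCompact K ∧ ∀ᶠ x in 𝓝 x₀, ∃ y ∈ K, IsMinOn (f x) univ y := by
  let y₀ : Y := Classical.arbitrary Y
  obtain ⟨c, hc⟩ := exists_gt (f x₀ y₀)
  obtain ⟨s, hs, r, hr, hsr⟩ := eventually_prod_iff.1 (hf_lim.eventually_gt_atTop c)
  obtain ⟨K, hK, hKr⟩ := mem_cocompact.1 hr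
  refine ⟨insert y₀ K, hK.insert y₀, ?_⟩
  filter_upwards [hs, hf_usc y₀ c hc] with x hxs hxc
  refine exists_isMinOn_univ_of_isCompact (hf_lsc x) (hK.insert y₀) (mem_insert y₀ K)
    fun y hy => ?_
  have hyr : r y := hKr fun hyK => hy (mem_insert_of_mem y₀ hyK)
  exact (hxc.trans (hsr hxs hyr)).le

theorem eventually_forall_isMinOn_imp [DenselyOrdered β]
    (hf_lsc : LowerSemicontinuous (Function.uncurry f))
    (hf_usc : ∀ y, UpperSemicontinuousAt (f · y) x₀) {K : Set Y} (hK : IsCompact K)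
    {P : X → Y → Prop}
    (hP : ∀ y ∈ K, IsMinOn (f x₀) univ y → ∀ᶠ z : X × Y in 𝓝 (x₀, y), P z.1 z.2) :
    ∀ᶠ x in 𝓝 x₀, ∀ y ∈ K, IsMinOn (f x) univ y → P x y := by
  refine hK.eventually_forall_of_forall_eventually fun y hyK => ?_
  by_cases hy : IsMinOn (f x₀) univ y
  · exact (hP y hyK hy).mono fun z hz _ => hz
  · obtain ⟨y', hy'⟩ : ∃ y', f x₀ y' < f x₀ y := by simpa [isMinOn_univ_iff] using hy
    obtain ⟨c, hy'c, hcy⟩ := exists_between hy'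
    have h_below : ∀ᶠ z : X × Y in 𝓝 (x₀, y), f z.1 y' < c :=
      (tendsto_fst.mono_left nhds_prod_eq.le).eventually (hf_usc y' c hy'c)
    filter_upwards [h_below, hf_lsc (x₀, y) c hcy] with z hz_below hz_above hz
    exact absurd (isMinOn_univ_iff.1 hz y') (hz_below.trans hz_above).not_ge

end Minimum

section Danskin

variable {E F Y : Type*} [NormedAddCommGroup E] [NormedSpace ℝ E] [NormedAddCommGroup F]
  [NormedSpace ℝ F] [TopologicalSpace Y]

theorem eventually_norm_sub_sub_le_of_continuousAt {f : E → Y → F} {f' : E → Y → E →L[ℝ] F}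
    {x₀ : E} {y₀ : Y} (hf : ∀ x y, HasFDerivAt (f · y) (f' x y) x)
    (hf' : ContinuousAt (Function.uncurry f') (x₀, y₀)) {ε : ℝ} (hε : 0 < ε) :
    ∀ᶠ z : E × Y in 𝓝 (x₀, y₀),
      ‖f z.1 z.2 - f x₀ z.2 - f' x₀ y₀ (z.1 - x₀)‖ ≤ ε * ‖z.1 - x₀‖ := by
  have h_near : ∀ᶠ z : E × Y in 𝓝 x₀ ×ˢ 𝓝 y₀, ‖f' z.1 z.2 - f' x₀ y₀‖ < ε := by
    rw [← nhds_prod_eq]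
    simpa only [dist_eq_norm, Function.uncurry_def] using Metric.tendsto_nhds.1 hf' ε hε
  obtain ⟨s, hs, r, hr, hsr⟩ := eventually_prod_iff.1 h_near
  obtain ⟨δ, hδ, hδs⟩ := Metric.eventually_nhds_iff_ball.1 hs
  rw [nhds_prod_eq]
  filter_upwards [prod_mem_prod (ball_mem_nhds x₀ hδ) hr] with ⟨x, y⟩ ⟨hx, hy⟩
  exact (convex_ball x₀ δ).norm_image_sub_le_of_norm_hasFDerivWithin_le'
    (fun w _ => (hf w y).hasFDerivWithinAt) (fun w hw => (hsr (hδs w hw) hy).le)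
    (mem_ball_self hδ) hx

theorem hasFDerivAt_iInf_of_forall_isMinOn [Nonempty Y] {f : E → Y → ℝ}
    {f' : E → Y → E →L[ℝ] ℝ} {x₀ : E} {p : E →L[ℝ] ℝ}
    (hf_lsc : LowerSemicontinuous (Function.uncurry f))
    (hf_lim : Tendsto (Function.uncurry f) (𝓝 x₀ ×ˢ cocompact Y) atTop)
    (hf : ∀ x y, HasFDerivAt (f · y) (f' x y) x)
    (hf' : Continuous (Function.uncurry f'))
    (hp : ∀ y, IsMinOn (f x₀) univ y → f' x₀ y = p) :
    HasFDerivAt (fun x => ⨅ y, f x y) p x₀ := by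
  have hf_usc (y : Y) : UpperSemicontinuousAt (f · y) x₀ :=
    (hf x₀ y).continuousAt.upperSemicontinuousAt
  obtain ⟨K, hK, hK_min⟩ := exists_isCompact_eventually_exists_isMinOn (f := f)
    (fun x => hf_lsc.comp (Continuous.prodMk_right x)) hf_usc hf_lim
  obtain ⟨y₀, -, hy₀⟩ := hK_min.self_of_nhds
  rw [hasFDerivAt_iff_isLittleO, Asymptotics.isLittleO_iff]
  intro ε hε
  have h_upper : ∀ᶠ x in 𝓝 x₀, ‖f x y₀ - f x₀ y₀ - p (x - x₀)‖ ≤ ε * ‖x - x₀‖ :=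
    (hp y₀ hy₀ ▸ hf x₀ y₀).isLittleO.def hε
  have h_lower : ∀ᶠ x in 𝓝 x₀, ∀ y ∈ K, IsMinOn (f x) univ y →
      ‖f x y - f x₀ y - p (x - x₀)‖ ≤ ε * ‖x - x₀‖ :=
    eventually_forall_isMinOn_imp hf_lsc hf_usc hK fun y _ hy => by
      simpa only [hp y hy] using
        eventually_norm_sub_sub_le_of_continuousAt hf (hf'.continuousAt (x := (x₀, y))) hε
  filter_upwards [hK_min, h_upper, h_lower] with x ⟨y, hyK, hy⟩ hx_upper hx_lower
  have hxy := (abs_le.1 (hx_lower y hyK hy)).1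
  have hxy₀ := (abs_le.1 hx_upper).2
  have h_le_y₀ : f x y ≤ f x y₀ := isMinOn_univ_iff.1 hy y₀
  have h_le_y : f x₀ y₀ ≤ f x₀ y := isMinOn_univ_iff.1 hy₀ y
  rw [iInf_eq_of_isMinOn_univ hy, iInf_eq_of_isMinOn_univ hy₀, Real.norm_eq_abs, abs_le]
  constructor <;> linarith

end Danskin

section Cobounded

variable {E : Type*} [NormedAddCommGroup E]

theorem tendsto_snd_sub_fst_cobounded (x₀ : E) :
    Tendsto (fun z : E × E => z.2 - z.1) (𝓝 x₀ ×ˢ Bornology.cobounded E)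
      (Bornology.cobounded E) := by
  rw [← tendsto_norm_atTop_iff_cobounded]
  have h_fst : Tendsto (fun z : E × E => -‖z.1‖) (𝓝 x₀ ×ˢ Bornology.cobounded E) (𝓝 (-‖x₀‖)) :=
    tendsto_fst.norm.neg
  have h_snd : Tendsto (fun z : E × E => ‖z.2‖) (𝓝 x₀ ×ˢ Bornology.cobounded E) atTop :=
    tendsto_norm_cobounded_atTop.comp tendsto_snd
  exact tendsto_atTop_mono (fun z => norm_sub_norm_le z.2 z.1) (h_snd.atTop_add h_fst)

theorem tendsto_cobounded_atTop_of_div_norm {L : E → ℝ}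
    (hL : Tendsto (fun x => L x / ‖x‖) (Bornology.cobounded E) atTop) :
    Tendsto L (Bornology.cobounded E) atTop := by
  refine (hL.atTop_mul_atTop₀ tendsto_norm_cobounded_atTop).congr' ?_
  filter_upwards [tendsto_norm_cobounded_atTop.eventually_ne_atTop 0] with x hx
  exact div_mul_cancel₀ (L x) hx

theorem tendsto_const_smul_cobounded [NormedSpace ℝ E] {c : ℝ} (hc : c ≠ 0) :
    Tendsto (c • · : E → E) (Bornology.cobounded E) (Bornology.cobounded E) := by
  rw [← tendsto_norm_atTop_iff_cobounded]
  simpa only [norm_smul] using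
    tendsto_norm_cobounded_atTop.const_mul_atTop (norm_pos_iff.2 hc)

end Cobounded

section HopfLax

variable {E : Type*} [NormedAddCommGroup E] [NormedSpace ℝ E]

/-- The infimal convolution (Hopf–Lax formula) of `u` and `L` on a normed space; `infConv` is the
case `E = ℝⁿ`. -/
def hopfLax (u L : E → ℝ) (t : ℝ) (x : E) : ℝ :=
  ⨅ a, (u (x + t • a) + t * L a)

/-- The set of minimizers in the Hopf–Lax formula; `minSet` is the case `E = ℝⁿ`. -/
def hopfLaxArgmin (u L : E → ℝ) (t : ℝ) (x : E) : Set E :=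
  {a | hopfLax u L t x = u (x + t • a) + t * L a}

/-- The expression minimized in the Hopf–Lax formula, as a function of `x` and of the endpoint
`y = x + t a` in place of `a`. -/
def hopfLaxCost (u L : E → ℝ) (t : ℝ) (x y : E) : ℝ :=
  u y + t * L (t⁻¹ • (y - x))

variable {u L : E → ℝ} {t : ℝ}

theorem hopfLax_eq_iInf_hopfLaxCost (ht : t ≠ 0) (x : E) :
    hopfLax u L t x = ⨅ y, hopfLaxCost u L t x y := by
  have h_surj : Function.Surjective fun a : E => x + t • a := fun y =>
    ⟨t⁻¹ • (y - x), by simp [ht]⟩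
  refine h_surj.iInf_congr _ fun a => ?_
  rw [hopfLaxCost, add_sub_cancel_left, inv_smul_smul₀ ht]

theorem inv_smul_sub_mem_hopfLaxArgmin (ht : t ≠ 0) {x y : E}
    (hy : IsMinOn (hopfLaxCost u L t x) univ y) : t⁻¹ • (y - x) ∈ hopfLaxArgmin u L t x := by
  rw [hopfLaxArgmin, mem_ofPred_eq, hopfLax_eq_iInf_hopfLaxCost ht, iInf_eq_of_isMinOn_univ hy,
    smul_inv_smul₀ ht, add_sub_cancel, hopfLaxCost]

theorem lowerSemicontinuous_hopfLaxCost (hu : LowerSemicontinuous u) (hL : Continuous L) :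
    LowerSemicontinuous (Function.uncurry (hopfLaxCost u L t)) := by
  have hLc : Continuous fun z : E × E => t * L (t⁻¹ • (z.2 - z.1)) := by fun_prop
  exact (hu.comp continuous_snd).add hLc.lowerSemicontinuous

theorem hasFDerivAt_hopfLaxCost (ht : t ≠ 0) (hL : Differentiable ℝ L) (x y : E) :
    HasFDerivAt (hopfLaxCost u L t · y) (-fderiv ℝ L (t⁻¹ • (y - x))) x := by
  have h_inner : HasFDerivAt (fun x : E => t⁻¹ • (y - x))
      (t⁻¹ • -ContinuousLinearMap.id ℝ E) x :=
    ((hasFDerivAt_id x).const_sub y).const_smul t⁻¹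
  have h_cost := (((hL _).hasFDerivAt.comp x h_inner).const_mul t).const_add (u y)
  refine h_cost.congr_fderiv ?_
  ext v
  simp [ht]

theorem tendsto_hopfLaxCost_atTop (ht : 0 < t) (hu : BddBelow (range u))
    (hL : Tendsto L (Bornology.cobounded E) atTop) (x₀ : E) :
    Tendsto (Function.uncurry (hopfLaxCost u L t)) (𝓝 x₀ ×ˢ Bornology.cobounded E) atTop := by
  obtain ⟨m, hm⟩ := hu
  refine tendsto_atTop_add_left_of_le _ m (fun z => hm (mem_range_self z.2)) ?_
  exact (hL.comp ((tendsto_const_smul_cobounded (inv_ne_zero ht.ne')).comp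
    (tendsto_snd_sub_fst_cobounded x₀))).const_mul_atTop ht

theorem hasFDerivAt_hopfLax [ProperSpace E] (ht : 0 < t) (hu : LowerSemicontinuous u)
    (hu_bdd : BddBelow (range u)) (hL : ContDiff ℝ 1 L)
    (hL_lim : Tendsto L (Bornology.cobounded E) atTop) {x : E} {q : E →L[ℝ] ℝ}
    (hq : ∀ a ∈ hopfLaxArgmin u L t x, fderiv ℝ L a = q) :
    HasFDerivAt (hopfLax u L t) (-q) x := by
  have hDL : Continuous (fderiv ℝ L) := hL.continuous_fderiv one_ne_zero
  rw [funext (hopfLax_eq_iInf_hopfLaxCost ht.ne')]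
  refine hasFDerivAt_iInf_of_forall_isMinOn (lowerSemicontinuous_hopfLaxCost hu hL.continuous) ?_
    (hasFDerivAt_hopfLaxCost ht.ne' (hL.differentiable one_ne_zero))
    (hDL.comp (by fun_prop)).neg
    fun y hy => congrArg _ (hq _ (inv_smul_sub_mem_hopfLaxArgmin ht.ne' hy))
  rw [← Metric.cobounded_eq_cocompact]
  exact tendsto_hopfLaxCost_atTop ht hu_bdd hL_lim x

theorem stmt6_general [ProperSpace E] (hu : LowerSemicontinuous u) (hu_bdd : BddBelow (range u))
    (hL : ContDiff ℝ 1 L) (hL_lim : Tendsto L (Bornology.cobounded E) atTop) (ht : 0 < t) (x : E) :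
    (∀ a ∈ hopfLaxArgmin u L t x, HasFDerivAt (hopfLax u L t) (-fderiv ℝ L a) x) ↔
      ∀ a ∈ hopfLaxArgmin u L t x, ∀ a' ∈ hopfLaxArgmin u L t x,
        fderiv ℝ L a = fderiv ℝ L a' :=
  ⟨fun h a ha a' ha' => neg_injective ((h a ha).unique (h a' ha')),
    fun h a ha => hasFDerivAt_hopfLax ht hu hu_bdd hL hL_lim fun b hb => h b hb a ha⟩

end HopfLax

/-- Corollary 2.2. For continuous bounded `u` and `t > 0`, the infimal
convolution `u_t` is differentiable at `x` with `Du_t(x) = −DL(a)` for every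
`a ∈ R u_t(x)` if and only if `DL(a) = DL(a')` for all `a, a' ∈ R u_t(x)`. -/
theorem stmt6 {n : ℕ}
    (u : Eucl n → ℝ) (hu_cont : Continuous u) (hu_bdd : ∃ M, ∀ x, |u x| ≤ M)
    (L : Eucl n → ℝ) (hL_nonneg : ∀ x, 0 ≤ L x) (hL_C1 : ContDiff ℝ 1 L)
    (hL0 : L 0 = 0) (hDL0 : gradient L 0 = 0) (hL_sl : Superlinear L)
    (t : ℝ) (ht : 0 < t) (x : Eucl n) :
    (∀ a ∈ minSet u L t x, HasGradientAt (infConv u L t) (-(gradient L a)) x) ↔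
    (∀ a ∈ minSet u L t x, ∀ a' ∈ minSet u L t x, gradient L a = gradient L a') := by
  have hu_bddBelow : BddBelow (range u) :=
    hu_bdd.elim fun M hM => ⟨-M, forall_mem_range.2 fun y => neg_le_of_abs_le (hM y)⟩
  have h_general := stmt6_general hu_cont.lowerSemicontinuous hu_bddBelow hL_C1
    (tendsto_cobounded_atTop_of_div_norm hL_sl) ht x
  simp only [hasGradientAt_iff_hasFDerivAt, map_neg, ← toDual_gradient,
    EmbeddingLike.apply_eq_iff_eq] at h_general ⊢
  exact h_general
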